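/- As linear maps V_{t₈} → V_{t₁}⊗V_{t₂}⊗V_{t₃}: (I_{t₁}⊗Y'_{t₂,t₃})∘Y_{t₁,t₉} = −((−1)^{σ₂}·λ₃/(λ₂+λ₃))·(Y'_{t₁,t₂}⊗I_{t₃})∘Y_{t₇,t₃} + κ·(Y_{t₁,t₂}⊗I_{t₃})∘Y'_{t₄,t₃}, and (I_{t₁}⊗Y_{t₂,t₃})∘Y'_{t₁,t₆} = (Y'_{t₁,t₂}⊗I_{t₃})∘Y_{t₇,t₃} + ((−1)^{σ₂}·λ₁/(λ₁+λ₂))·(Y_{t₁,t₂}⊗I_{t₃})∘Y'_{t₄,t₃}. Moreover each of the two pairs {(I_{t₁}⊗Y'_{t₂,t₃})∘Y_{t₁,t₉}, (I_{t₁}⊗Y_{t₂,t₃})∘Y'_{t₁,t₆}} and {(Y'_{t₁,t₂}⊗I_{t₃})∘Y_{t₇,t₃}, (Y_{t₁,t₂}⊗I_{t₃})∘Y'_{t₄,t₃}} is linearly independent. -/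

import Mathlib

open TensorProduct

noncomputable section

/-- a triple t = (λ, μ, σ) ∈ ℚ × ℚ × ℤ/2 -/
structure Triple where
  lam : ℚ
  mu : ℚ
  sg : ZMod 2

instance : Add Triple := ⟨fun a b => ⟨a.lam + b.lam, a.mu + b.mu, a.sg + b.sg⟩⟩
instance : Neg Triple := ⟨fun a => ⟨-a.lam, -a.mu, -a.sg⟩⟩
instance : Sub Triple := ⟨fun a b => a + -b⟩

def e₂ : Triple := ⟨0, 1, 0⟩
def e₃ : Triple := ⟨0, 0, 1⟩
/-- t* = (−λ, −μ, σ+1) -/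
def Triple.star (t : Triple) : Triple := ⟨-t.lam, -t.mu, t.sg + 1⟩

/-- the underlying space of every V_t: basis v = (1,0) (degree σ), w = (0,1) (degree σ+1) -/
abbrev V : Type := ℚ × ℚ
abbrev VV : Type := V ⊗[ℚ] V
abbrev VVV : Type := V ⊗[ℚ] VV

def vv : V := (1, 0)
def ww : V := (0, 1)

/-- (−1)^σ -/
def sgn (s : ZMod 2) : ℚ := if s = 0 then 1 else -1

/-- H: v ↦ (μ+1)v, w ↦ (μ−1)w -/
def opH (t : Triple) : V →ₗ[ℚ] V :=
  LinearMap.prodMap ((t.mu + 1) • LinearMap.id) ((t.mu - 1) • LinearMap.id)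
/-- D: multiplication by λ -/
def opD (t : Triple) : V →ₗ[ℚ] V := t.lam • LinearMap.id
/-- E: v ↦ 0, w ↦ λv -/
def opE (t : Triple) : V →ₗ[ℚ] V := (LinearMap.inl ℚ ℚ ℚ) ∘ₗ (t.lam • LinearMap.snd ℚ ℚ ℚ)
/-- F: v ↦ w, w ↦ 0 -/
def opF (t : Triple) : V →ₗ[ℚ] V := (LinearMap.inr ℚ ℚ ℚ) ∘ₗ (LinearMap.fst ℚ ℚ ℚ)
/-- the parity operator x ↦ (−1)^{deg x} x on V_t -/
def opJ (t : Triple) : V →ₗ[ℚ] V :=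
  LinearMap.prodMap (sgn t.sg • LinearMap.id) ((- sgn t.sg) • LinearMap.id)

/-- the four generators H, D, E, F of gl(1|1) -/
inductive Gen | H | D | E | F

/-- H and D have degree 0; E and F have degree 1 -/
def Gen.isEven : Gen → Bool
  | .H => true | .D => true | .E => false | .F => false

def op : Gen → Triple → V →ₗ[ℚ] V
  | .H, t => opH t
  | .D, t => opD t
  | .E, t => opE t
  | .F, t => opF t

/-- the super-Leibniz action X·(x⊗y) = (X·x)⊗y + (−1)^{deg X·deg x}·x⊗(X·y)
on V_{t₁}⊗V_{t₂} (the sign being implemented by the parity operator) -/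
def op2 (g : Gen) (t₁ t₂ : Triple) : VV →ₗ[ℚ] VV :=
  TensorProduct.map (op g t₁) LinearMap.id +
  TensorProduct.map (if g.isEven then LinearMap.id else opJ t₁) (op g t₂)

/-- the linear map ℚ×ℚ → M sending (1,0) ↦ p and (0,1) ↦ q -/
def bmap {M : Type*} [AddCommGroup M] [Module ℚ M] (p q : M) : V →ₗ[ℚ] M :=
  LinearMap.coprod (LinearMap.toSpanSingleton ℚ M p) (LinearMap.toSpanSingleton ℚ M q)

/-- Y_{t₁,t₂} : V_{t₁+t₂+e₂} → V_{t₁}⊗V_{t₂} -/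
def Ymap (t₁ t₂ : Triple) : V →ₗ[ℚ] VV :=
  bmap (vv ⊗ₜ[ℚ] vv) (ww ⊗ₜ[ℚ] vv + sgn t₁.sg • (vv ⊗ₜ[ℚ] ww))

/-- Y'_{t₁,t₂} : V_{t₁+t₂−e₂+e₃} → V_{t₁}⊗V_{t₂} -/
def Y'map (t₁ t₂ : Triple) : V →ₗ[ℚ] VV :=
  bmap ((t₁.lam + t₂.lam)⁻¹ •
      (t₁.lam • (vv ⊗ₜ[ℚ] ww) - (sgn t₁.sg * t₂.lam) • (ww ⊗ₜ[ℚ] vv)))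
    (ww ⊗ₜ[ℚ] ww)

/-- L_{t₁,t₂} : V_{t₁}⊗V_{t₂} → V_{t₁+t₂+e₂} -/
def Lmap (t₁ t₂ : Triple) : VV →ₗ[ℚ] V :=
  TensorProduct.lift (LinearMap.mk₂ ℚ
    (fun x y => ((x.1 * y.1 : ℚ),
      (t₁.lam / (t₁.lam + t₂.lam)) * (x.2 * y.1)
        + (sgn t₁.sg * t₂.lam / (t₁.lam + t₂.lam)) * (x.1 * y.2)))
    (by intro x x' y; apply Prod.ext <;> simp <;> ring)
    (by intro a x y; apply Prod.ext <;> simp [smul_eq_mul] <;> ring)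
    (by intro x y y'; apply Prod.ext <;> simp <;> ring)
    (by intro a x y; apply Prod.ext <;> simp [smul_eq_mul] <;> ring))

/-- L'_{t₁,t₂} : V_{t₁}⊗V_{t₂} → V_{t₁+t₂−e₂+e₃} -/
def L'map (t₁ t₂ : Triple) : VV →ₗ[ℚ] V :=
  TensorProduct.lift (LinearMap.mk₂ ℚ
    (fun x y => ((x.1 * y.2 - sgn t₁.sg * (x.2 * y.1) : ℚ), (x.2 * y.2 : ℚ)))
    (by intro x x' y; apply Prod.ext <;> simp <;> ring)
    (by intro a x y; apply Prod.ext <;> simp [smul_eq_mul] <;> ring)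
    (by intro x y y'; apply Prod.ext <;> simp <;> ring)
    (by intro a x y; apply Prod.ext <;> simp [smul_eq_mul] <;> ring))

/-- ∩_t : V_{t*}⊗V_t → ℚ -/
def capMap (t : Triple) : VV →ₗ[ℚ] ℚ :=
  TensorProduct.lift (LinearMap.mk₂ ℚ
    (fun x y => (x.1 * y.2 + sgn t.sg * (x.2 * y.1) : ℚ))
    (by intro x x' y; simp; ring)
    (by intro a x y; simp [smul_eq_mul]; ring)
    (by intro x y y'; simp; ring)
    (by intro a x y; simp [smul_eq_mul]; ring))

/-- ∪_t : ℚ → V_{t*}⊗V_t -/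
def cupMap (t : Triple) : ℚ →ₗ[ℚ] VV :=
  LinearMap.toSpanSingleton ℚ VV (ww ⊗ₜ[ℚ] vv - sgn t.sg • (vv ⊗ₜ[ℚ] ww))


/-- t₄ = t₁+t₂+e₂ -/
def T4 (t₁ t₂ : Triple) : Triple := t₁ + t₂ + e₂
/-- t₅ = t₄+t₃+e₂ -/
def T5 (t₁ t₂ t₃ : Triple) : Triple := T4 t₁ t₂ + t₃ + e₂
/-- t₆ = t₂+t₃+e₂ -/
def T6 (t₂ t₃ : Triple) : Triple := t₂ + t₃ + e₂
/-- t₇ = t₄−2e₂+e₃ -/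
def T7 (t₁ t₂ : Triple) : Triple := T4 t₁ t₂ - e₂ - e₂ + e₃
/-- t₈ = t₅−2e₂+e₃ -/
def T8 (t₁ t₂ t₃ : Triple) : Triple := T5 t₁ t₂ t₃ - e₂ - e₂ + e₃
/-- t₉ = t₆−2e₂+e₃ -/
def T9 (t₂ t₃ : Triple) : Triple := T6 t₂ t₃ - e₂ - e₂ + e₃
/-- κ = λ₂(λ₁+λ₂+λ₃)/((λ₁+λ₂)(λ₂+λ₃)) -/
def kap (t₁ t₂ t₃ : Triple) : ℚ :=
  t₂.lam * (t₁.lam + t₂.lam + t₃.lam) / ((t₁.lam + t₂.lam) * (t₂.lam + t₃.lam))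

/-!
Every intertwiner `V_{t₈} → V_{t₁} ⊗ V_{t₂} ⊗ V_{t₃}` in the theorem grafts one fusion map onto a
leg of another, and the two change-of-basis formulas follow by comparing values at `v` and `w`.
For linear independence, tensoring the relations `L' ∘ Y' = id` and `L' ∘ Y = 0` with the identity
gives a map that sends a combination of the two grafts to a multiple of the nonzero map `Y`, so the
first coefficient vanishes; the second one vanishes because `Y` has the left inverse `L` and `Y'` is
nonzero.
-/

section LinearIndependence

variable {K A B M N : Type*} [Field K] [AddCommGroup A] [Module K A] [AddCommGroup B] [Module K B]
  [AddCommGroup M] [Module K M] [AddCommGroup N] [Module K N]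

theorem linearIndependent_pair_of_map_eq_zero (φ : M →ₗ[K] N) {x y : M}
    (hφx : φ x ≠ 0) (hφy : φ y = 0) (hy : y ≠ 0) : LinearIndependent K ![x, y] := by
  refine LinearIndependent.pair_iff.mpr fun a b hab => ?_
  have ha : a = 0 := by simpa [hφx, hφy] using congrArg φ hab
  have hb : b = 0 := by simpa [ha, hy] using hab
  exact ⟨ha, hb⟩

theorem linearIndependent_pair_comp {i : A →ₗ[K] M} {j : B →ₗ[K] M}
    {p : M →ₗ[K] A} {q : M →ₗ[K] B} (hpi : p ∘ₗ i = LinearMap.id) (hpj : p ∘ₗ j = 0)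
    (hqj : q ∘ₗ j = LinearMap.id) {f : N →ₗ[K] A} {g : N →ₗ[K] B} (hf : f ≠ 0) (hg : g ≠ 0) :
    LinearIndependent K ![i ∘ₗ f, j ∘ₗ g] := by
  refine linearIndependent_pair_of_map_eq_zero (LinearMap.compRight K p) ?_ ?_ ?_
  · simpa [← LinearMap.comp_assoc, hpi] using hf
  · simp [← LinearMap.comp_assoc, hpj]
  · intro hjg
    apply hg
    calc g = q ∘ₗ j ∘ₗ g := by rw [← LinearMap.comp_assoc, hqj, LinearMap.id_comp]
      _ = 0 := by rw [hjg, LinearMap.comp_zero]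

end LinearIndependence

section Graft

variable {R A B C D N : Type*} [CommSemiring R] [AddCommMonoid A] [Module R A]
  [AddCommMonoid B] [Module R B] [AddCommMonoid C] [Module R C] [AddCommMonoid D] [Module R D]
  [AddCommMonoid N] [Module R N]

/-- The composite `(I ⊗ f) ∘ g`, grafting `f` onto the right leg of `g`. -/
def graftRight (f : A →ₗ[R] B ⊗[R] C) (g : N →ₗ[R] D ⊗[R] A) : N →ₗ[R] D ⊗[R] (B ⊗[R] C) :=
  TensorProduct.map LinearMap.id f ∘ₗ g

/-- The composite `(f ⊗ I) ∘ g`, grafting `f` onto the left leg of `g`. The result is reassociated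
to the right, so that on equal factors it can be compared with `graftRight`. -/
def graftLeft (f : A →ₗ[R] B ⊗[R] C) (g : N →ₗ[R] A ⊗[R] D) : N →ₗ[R] B ⊗[R] (C ⊗[R] D) :=
  (TensorProduct.assoc R B C D).toLinearMap ∘ₗ TensorProduct.map f LinearMap.id ∘ₗ g

theorem map_assoc_symm_comp_assoc_map (r : B ⊗[R] C →ₗ[R] A) (f : N →ₗ[R] B ⊗[R] C) :
    (TensorProduct.map r LinearMap.id ∘ₗ (TensorProduct.assoc R B C D).symm.toLinearMap) ∘ₗ
        (TensorProduct.assoc R B C D).toLinearMap ∘ₗ TensorProduct.map f LinearMap.id =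
      TensorProduct.map (r ∘ₗ f) LinearMap.id :=
  TensorProduct.ext' fun x y => by simp

end Graft

section GraftIndependence

variable {K A A' B C D N : Type*} [Field K] [AddCommGroup A] [Module K A]
  [AddCommGroup A'] [Module K A'] [AddCommGroup B] [Module K B] [AddCommGroup C] [Module K C]
  [AddCommGroup D] [Module K D] [AddCommGroup N] [Module K N]
  {i : A →ₗ[K] B ⊗[K] C} {j : A' →ₗ[K] B ⊗[K] C}
  {p : B ⊗[K] C →ₗ[K] A} {q : B ⊗[K] C →ₗ[K] A'}

theorem linearIndependent_graftRight (hpi : p ∘ₗ i = LinearMap.id) (hpj : p ∘ₗ j = 0)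
    (hqj : q ∘ₗ j = LinearMap.id) {f : N →ₗ[K] D ⊗[K] A} {g : N →ₗ[K] D ⊗[K] A'}
    (hf : f ≠ 0) (hg : g ≠ 0) :
    LinearIndependent K ![graftRight i f, graftRight j g] := by
  refine linearIndependent_pair_comp (p := TensorProduct.map LinearMap.id p)
    (q := TensorProduct.map LinearMap.id q) ?_ ?_ ?_ hf hg
  · rw [← TensorProduct.map_comp, hpi, LinearMap.id_comp, TensorProduct.map_id]
  · rw [← TensorProduct.map_comp, hpj, TensorProduct.map_zero_right]
  · rw [← TensorProduct.map_comp, hqj, LinearMap.id_comp, TensorProduct.map_id]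

theorem linearIndependent_graftLeft (hpi : p ∘ₗ i = LinearMap.id) (hpj : p ∘ₗ j = 0)
    (hqj : q ∘ₗ j = LinearMap.id) {f : N →ₗ[K] A ⊗[K] D} {g : N →ₗ[K] A' ⊗[K] D}
    (hf : f ≠ 0) (hg : g ≠ 0) :
    LinearIndependent K ![graftLeft i f, graftLeft j g] := by
  let assoc := TensorProduct.assoc K B C D
  refine linearIndependent_pair_comp
    (i := assoc.toLinearMap ∘ₗ TensorProduct.map i LinearMap.id)
    (j := assoc.toLinearMap ∘ₗ TensorProduct.map j LinearMap.id)
    (p := TensorProduct.map p LinearMap.id ∘ₗ assoc.symm.toLinearMap)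
    (q := TensorProduct.map q LinearMap.id ∘ₗ assoc.symm.toLinearMap) ?_ ?_ ?_ hf hg
  · rw [map_assoc_symm_comp_assoc_map, hpi, TensorProduct.map_id]
  · rw [map_assoc_symm_comp_assoc_map, hpj, TensorProduct.map_zero_left]
  · rw [map_assoc_symm_comp_assoc_map, hqj, TensorProduct.map_id]

end GraftIndependence

section Basis

variable {M : Type*} [AddCommGroup M] [Module ℚ M]

@[simp]
theorem bmap_vv (p q : M) : bmap p q vv = p := by
  simp [bmap, vv]

@[simp]
theorem bmap_ww (p q : M) : bmap p q ww = q := by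
  simp [bmap, ww]

theorem linearMap_ext_vv_ww {f g : V →ₗ[ℚ] M} (hv : f vv = g vv) (hw : f ww = g ww) : f = g :=
  LinearMap.prod_ext (LinearMap.ext_ring hv) (LinearMap.ext_ring hw)

end Basis

section Sign

theorem sgn_mul_self (s : ZMod 2) : sgn s * sgn s = 1 := by
  unfold sgn
  split_ifs <;> norm_num

theorem sgn_add (s t : ZMod 2) : sgn (s + t) = sgn s * sgn t := by
  have hst : s + t = 0 ↔ (s = 0 ↔ t = 0) := by decide +revert
  by_cases hs : s = 0 <;> by_cases ht : t = 0 <;> simp [sgn, hst, hs, ht]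

theorem sgn_one : sgn 1 = -1 := by
  decide

end Sign

namespace Triple

@[simp]
theorem lam_add (s t : Triple) : (s + t).lam = s.lam + t.lam := rfl

@[simp]
theorem sg_add (s t : Triple) : (s + t).sg = s.sg + t.sg := rfl

@[simp]
theorem sg_sub (s t : Triple) : (s - t).sg = s.sg - t.sg :=
  (sub_eq_add_neg s.sg t.sg).symm

end Triple

theorem T4_lam (t₁ t₂ : Triple) : (T4 t₁ t₂).lam = t₁.lam + t₂.lam := by
  simp [T4, e₂]

theorem T6_lam (t₂ t₃ : Triple) : (T6 t₂ t₃).lam = t₂.lam + t₃.lam := by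
  simp [T6, e₂]

theorem sgn_T4_sg (t₁ t₂ : Triple) : sgn (T4 t₁ t₂).sg = sgn t₁.sg * sgn t₂.sg := by
  simp [T4, e₂, sgn_add]

theorem sgn_T7_sg (t₁ t₂ : Triple) : sgn (T7 t₁ t₂).sg = -(sgn t₁.sg * sgn t₂.sg) := by
  simp [T7, e₂, e₃, sgn_add, sgn_one, sgn_T4_sg]

section Fusion

variable (t₁ t₂ : Triple)

@[simp]
theorem Ymap_vv : Ymap t₁ t₂ vv = vv ⊗ₜ vv :=
  bmap_vv _ _

@[simp]
theorem Ymap_ww : Ymap t₁ t₂ ww = ww ⊗ₜ vv + sgn t₁.sg • (vv ⊗ₜ ww) :=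
  bmap_ww _ _

@[simp]
theorem Y'map_vv :
    Y'map t₁ t₂ vv = (t₁.lam + t₂.lam)⁻¹ •
      (t₁.lam • (vv ⊗ₜ ww) - (sgn t₁.sg * t₂.lam) • (ww ⊗ₜ vv)) :=
  bmap_vv _ _

@[simp]
theorem Y'map_ww : Y'map t₁ t₂ ww = ww ⊗ₜ ww :=
  bmap_ww _ _

@[simp]
theorem Lmap_vv_tmul_vv : Lmap t₁ t₂ (vv ⊗ₜ vv) = vv := by
  simp [Lmap, vv]

@[simp]
theorem Lmap_ww_tmul_vv : Lmap t₁ t₂ (ww ⊗ₜ vv) = (t₁.lam / (t₁.lam + t₂.lam)) • ww := by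
  simp [Lmap, vv, ww]

@[simp]
theorem Lmap_vv_tmul_ww :
    Lmap t₁ t₂ (vv ⊗ₜ ww) = (sgn t₁.sg * t₂.lam / (t₁.lam + t₂.lam)) • ww := by
  simp [Lmap, vv, ww]

@[simp]
theorem L'map_vv_tmul_vv : L'map t₁ t₂ (vv ⊗ₜ vv) = 0 := by
  simp [L'map, vv]

@[simp]
theorem L'map_ww_tmul_vv : L'map t₁ t₂ (ww ⊗ₜ vv) = -sgn t₁.sg • vv := by
  simp [L'map, vv, ww]

@[simp]
theorem L'map_vv_tmul_ww : L'map t₁ t₂ (vv ⊗ₜ ww) = vv := by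
  simp [L'map, vv, ww]

@[simp]
theorem L'map_ww_tmul_ww : L'map t₁ t₂ (ww ⊗ₜ ww) = ww := by
  simp [L'map, ww]

theorem Ymap_ne_zero : Ymap t₁ t₂ ≠ 0 := by
  intro hY
  have hv : vv = 0 := by simpa [hY] using congrArg (Lmap t₁ t₂) (Ymap_vv t₁ t₂).symm
  simp [vv] at hv

theorem Y'map_ne_zero : Y'map t₁ t₂ ≠ 0 := by
  intro hY'
  have hw : ww = 0 := by simpa [hY'] using congrArg (L'map t₁ t₂) (Y'map_ww t₁ t₂).symm
  simp [ww] at hw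

theorem L'map_comp_Ymap : L'map t₁ t₂ ∘ₗ Ymap t₁ t₂ = 0 := by
  apply linearMap_ext_vv_ww <;> simp

variable {t₁ t₂}

theorem Lmap_comp_Ymap (h : t₁.lam + t₂.lam ≠ 0) :
    Lmap t₁ t₂ ∘ₗ Ymap t₁ t₂ = LinearMap.id := by
  apply linearMap_ext_vv_ww
  · simp
  · simp only [LinearMap.comp_apply, Ymap_ww, map_add, map_smul, Lmap_ww_tmul_vv,
      Lmap_vv_tmul_ww, LinearMap.id_apply]
    match_scalars
    field_simp
    linear_combination t₂.lam * sgn_mul_self t₁.sg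

theorem L'map_comp_Y'map (h : t₁.lam + t₂.lam ≠ 0) :
    L'map t₁ t₂ ∘ₗ Y'map t₁ t₂ = LinearMap.id := by
  apply linearMap_ext_vv_ww
  · simp only [LinearMap.comp_apply, Y'map_vv, map_sub, map_smul, L'map_ww_tmul_vv,
      L'map_vv_tmul_ww, LinearMap.id_apply]
    match_scalars
    field_simp
    linear_combination t₂.lam * sgn_mul_self t₁.sg
  · simp

end Fusion

section GraftValues

variable (t t₁ t₂ t₃ : Triple)

theorem graftRight_Y'map_Ymap_vv :
    graftRight (Y'map t₂ t₃) (Ymap t₁ t) vv =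
      (t₂.lam + t₃.lam)⁻¹ •
        (t₂.lam • (vv ⊗ₜ (vv ⊗ₜ ww)) - (sgn t₂.sg * t₃.lam) • (vv ⊗ₜ (ww ⊗ₜ vv))) := by
  simp [graftRight, tmul_sub]

theorem graftRight_Y'map_Ymap_ww :
    graftRight (Y'map t₂ t₃) (Ymap t₁ t) ww =
      (t₂.lam + t₃.lam)⁻¹ •
        (t₂.lam • (ww ⊗ₜ (vv ⊗ₜ ww)) - (sgn t₂.sg * t₃.lam) • (ww ⊗ₜ (ww ⊗ₜ vv)))
      + sgn t₁.sg • (vv ⊗ₜ (ww ⊗ₜ ww)) := by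
  simp [graftRight, tmul_sub]

theorem graftRight_Ymap_Y'map_vv :
    graftRight (Ymap t₂ t₃) (Y'map t₁ t) vv =
      (t₁.lam + t.lam)⁻¹ •
        (t₁.lam • (vv ⊗ₜ (ww ⊗ₜ vv) + sgn t₂.sg • (vv ⊗ₜ (vv ⊗ₜ ww)))
          - (sgn t₁.sg * t.lam) • (ww ⊗ₜ (vv ⊗ₜ vv))) := by
  simp [graftRight, tmul_add]

theorem graftRight_Ymap_Y'map_ww :
    graftRight (Ymap t₂ t₃) (Y'map t₁ t) ww =
      ww ⊗ₜ (ww ⊗ₜ vv) + sgn t₂.sg • (ww ⊗ₜ (vv ⊗ₜ ww)) := by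
  simp [graftRight, tmul_add]

theorem graftLeft_Y'map_Ymap_vv :
    graftLeft (Y'map t₁ t₂) (Ymap t t₃) vv =
      (t₁.lam + t₂.lam)⁻¹ •
        (t₁.lam • (vv ⊗ₜ (ww ⊗ₜ vv)) - (sgn t₁.sg * t₂.lam) • (ww ⊗ₜ (vv ⊗ₜ vv))) := by
  simp [graftLeft, sub_tmul, ← smul_tmul']

theorem graftLeft_Y'map_Ymap_ww :
    graftLeft (Y'map t₁ t₂) (Ymap t t₃) ww =
      ww ⊗ₜ (ww ⊗ₜ vv)
      + (sgn t.sg * (t₁.lam + t₂.lam)⁻¹) •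
        (t₁.lam • (vv ⊗ₜ (ww ⊗ₜ ww)) - (sgn t₁.sg * t₂.lam) • (ww ⊗ₜ (vv ⊗ₜ ww))) := by
  simp [graftLeft, sub_tmul, ← smul_tmul', mul_smul]

theorem graftLeft_Ymap_Y'map_vv :
    graftLeft (Ymap t₁ t₂) (Y'map t t₃) vv =
      (t.lam + t₃.lam)⁻¹ •
        (t.lam • (vv ⊗ₜ (vv ⊗ₜ ww))
          - (sgn t.sg * t₃.lam) • (ww ⊗ₜ (vv ⊗ₜ vv) + sgn t₁.sg • (vv ⊗ₜ (ww ⊗ₜ vv)))) := by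
  simp [graftLeft, add_tmul, ← smul_tmul']

theorem graftLeft_Ymap_Y'map_ww :
    graftLeft (Ymap t₁ t₂) (Y'map t t₃) ww =
      ww ⊗ₜ (vv ⊗ₜ ww) + sgn t₁.sg • (vv ⊗ₜ (ww ⊗ₜ ww)) := by
  simp [graftLeft, add_tmul, ← smul_tmul']

end GraftValues

section ChangeOfBasis

variable {t₁ t₂ t₃ : Triple}

theorem graftRight_Y'map_Ymap (h₁₂ : t₁.lam + t₂.lam ≠ 0) (h₂₃ : t₂.lam + t₃.lam ≠ 0)
    (h₁₂₃ : t₁.lam + t₂.lam + t₃.lam ≠ 0) :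
    graftRight (Y'map t₂ t₃) (Ymap t₁ (T9 t₂ t₃)) =
      (-(sgn t₂.sg * t₃.lam / (t₂.lam + t₃.lam))) • graftLeft (Y'map t₁ t₂) (Ymap (T7 t₁ t₂) t₃)
      + kap t₁ t₂ t₃ • graftLeft (Ymap t₁ t₂) (Y'map (T4 t₁ t₂) t₃) := by
  have hs₁ := sgn_mul_self t₁.sg
  have hs₂ := sgn_mul_self t₂.sg
  apply linearMap_ext_vv_ww
  · simp only [LinearMap.add_apply, LinearMap.smul_apply, graftRight_Y'map_Ymap_vv,
      graftLeft_Y'map_Ymap_vv, graftLeft_Ymap_Y'map_vv, T4_lam, sgn_T4_sg, kap]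
    match_scalars <;> field_simp <;> grind
  · simp only [LinearMap.add_apply, LinearMap.smul_apply, graftRight_Y'map_Ymap_ww,
      graftLeft_Y'map_Ymap_ww, graftLeft_Ymap_Y'map_ww, sgn_T7_sg, kap]
    match_scalars <;> field_simp <;> grind

theorem graftRight_Ymap_Y'map (h₁₂ : t₁.lam + t₂.lam ≠ 0)
    (h₁₂₃ : t₁.lam + t₂.lam + t₃.lam ≠ 0) :
    graftRight (Ymap t₂ t₃) (Y'map t₁ (T6 t₂ t₃)) =
      graftLeft (Y'map t₁ t₂) (Ymap (T7 t₁ t₂) t₃)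
      + (sgn t₂.sg * t₁.lam / (t₁.lam + t₂.lam)) •
        graftLeft (Ymap t₁ t₂) (Y'map (T4 t₁ t₂) t₃) := by
  have hs₁ := sgn_mul_self t₁.sg
  have hs₂ := sgn_mul_self t₂.sg
  apply linearMap_ext_vv_ww
  · simp only [LinearMap.add_apply, LinearMap.smul_apply, graftRight_Ymap_Y'map_vv,
      graftLeft_Y'map_Ymap_vv, graftLeft_Ymap_Y'map_vv, T4_lam, T6_lam, sgn_T4_sg, ← add_assoc]
    match_scalars <;> field_simp <;> grind
  · simp only [LinearMap.add_apply, LinearMap.smul_apply, graftRight_Ymap_Y'map_ww,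
      graftLeft_Y'map_Ymap_ww, graftLeft_Ymap_Y'map_ww, sgn_T7_sg]
    match_scalars <;> field_simp <;> grind

end ChangeOfBasis

/-- Lemma 24: change of bases in Hom(V_{t₈}, V_{t₁}⊗V_{t₂}⊗V_{t₃}). -/
theorem stmt12 (t₁ t₂ t₃ : Triple)
    (h₁ : t₁.lam ≠ 0) (h₂ : t₂.lam ≠ 0) (h₃ : t₃.lam ≠ 0)
    (h₁₂ : t₁.lam + t₂.lam ≠ 0) (h₂₃ : t₂.lam + t₃.lam ≠ 0)
    (h₁₂₃ : t₁.lam + t₂.lam + t₃.lam ≠ 0) :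
    TensorProduct.map LinearMap.id (Y'map t₂ t₃) ∘ₗ Ymap t₁ (T9 t₂ t₃) =
      (-(sgn t₂.sg * t₃.lam / (t₂.lam + t₃.lam))) •
        ((TensorProduct.assoc ℚ V V V).toLinearMap
          ∘ₗ TensorProduct.map (Y'map t₁ t₂) LinearMap.id ∘ₗ Ymap (T7 t₁ t₂) t₃)
      + kap t₁ t₂ t₃ •
        ((TensorProduct.assoc ℚ V V V).toLinearMap
          ∘ₗ TensorProduct.map (Ymap t₁ t₂) LinearMap.id ∘ₗ Y'map (T4 t₁ t₂) t₃) ∧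
    TensorProduct.map LinearMap.id (Ymap t₂ t₃) ∘ₗ Y'map t₁ (T6 t₂ t₃) =
      ((TensorProduct.assoc ℚ V V V).toLinearMap
          ∘ₗ TensorProduct.map (Y'map t₁ t₂) LinearMap.id ∘ₗ Ymap (T7 t₁ t₂) t₃)
      + (sgn t₂.sg * t₁.lam / (t₁.lam + t₂.lam)) •
        ((TensorProduct.assoc ℚ V V V).toLinearMap
          ∘ₗ TensorProduct.map (Ymap t₁ t₂) LinearMap.id ∘ₗ Y'map (T4 t₁ t₂) t₃) ∧
    (∀ a b : ℚ,
      a • (TensorProduct.map LinearMap.id (Y'map t₂ t₃) ∘ₗ Ymap t₁ (T9 t₂ t₃))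
        + b • (TensorProduct.map LinearMap.id (Ymap t₂ t₃) ∘ₗ Y'map t₁ (T6 t₂ t₃)) = 0 →
      a = 0 ∧ b = 0) ∧
    (∀ a b : ℚ,
      a • ((TensorProduct.assoc ℚ V V V).toLinearMap
            ∘ₗ TensorProduct.map (Y'map t₁ t₂) LinearMap.id ∘ₗ Ymap (T7 t₁ t₂) t₃)
        + b • ((TensorProduct.assoc ℚ V V V).toLinearMap
            ∘ₗ TensorProduct.map (Ymap t₁ t₂) LinearMap.id ∘ₗ Y'map (T4 t₁ t₂) t₃) = 0 →
      a = 0 ∧ b = 0) := by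
  have graftRight_independent :=
    linearIndependent_graftRight (L'map_comp_Y'map h₂₃) (L'map_comp_Ymap t₂ t₃)
      (Lmap_comp_Ymap h₂₃) (Ymap_ne_zero t₁ (T9 t₂ t₃)) (Y'map_ne_zero t₁ (T6 t₂ t₃))
  have graftLeft_independent :=
    linearIndependent_graftLeft (L'map_comp_Y'map h₁₂) (L'map_comp_Ymap t₁ t₂)
      (Lmap_comp_Ymap h₁₂) (Ymap_ne_zero (T7 t₁ t₂) t₃) (Y'map_ne_zero (T4 t₁ t₂) t₃)
  exact ⟨graftRight_Y'map_Ymap h₁₂ h₂₃ h₁₂₃, graftRight_Ymap_Y'map h₁₂ h₁₂₃,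
    fun _ _ => graftRight_independent.eq_zero_of_pair,
    fun _ _ => graftLeft_independent.eq_zero_of_pair⟩

end
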